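/- arXiv:math/0201023 — 3 statements merged into one kernel-verified Lean document; each statement's English description precedes it below -/
import Mathlib

section
/- Let n ≥ 1, let c′ > 0, let A ⊆ ℝⁿ be an unbounded set with 0 ∈ A and μ(A) ≥ 1/c′, and let f : A → ℝⁿ be an ε-nearisometry for some ε ≥ 0 with f 0 = 0. Then there is a linear isometry U : ℝⁿ → ℝⁿ with |U x − f x| ≤ 2c′ε for all x ∈ A. -/
open Filter Metric Bornology RealInnerProductSpace

/-- `f` is an `ε`-nearisometry on `A`: `||f x - f y| - |x - y|| ≤ ε` for all `x, y ∈ A`. -/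
def IsNearisometryOn {E F : Type*} [NormedAddCommGroup E] [NormedAddCommGroup F]
    (f : E → F) (A : Set E) (ε : ℝ) : Prop :=
  ∀ x ∈ A, ∀ y ∈ A, |‖f x - f y‖ - ‖x - y‖| ≤ ε

/-- `u` is a cluster direction of `A`: there is a sequence `(x_j)` in `A` with
`‖x_j‖ → ∞` and `x_j / ‖x_j‖ → u`. -/
def IsClusterDirection {E : Type*} [NormedAddCommGroup E] [NormedSpace ℝ E]
    (A : Set E) (u : E) : Prop :=
  ∃ x : ℕ → E, (∀ j, x j ∈ A) ∧ Tendsto (fun j => ‖x j‖) atTop atTop ∧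
    Tendsto (fun j => ‖x j‖⁻¹ • x j) atTop (nhds u)

/-- `μ(A) = μ₁(cd A)`, where `μ₁(X) = inf_{|e|=1} sup {|u ⬝ e| : u ∈ X}` (with `sup ∅ = 0`,
as is the convention for `Real.sSup`). -/
noncomputable def muDir {E : Type*} [NormedAddCommGroup E] [InnerProductSpace ℝ E]
    (A : Set E) : ℝ :=
  sInf {s | ∃ e : E, ‖e‖ = 1 ∧
    s = sSup {t | ∃ u, IsClusterDirection A u ∧ t = abs ⟪u, e⟫}}

/-!
Each cluster direction `u` of `A` has an image direction `v`, obtained by following `f` along a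
sequence escaping to infinity in the direction `u`. As `z → ∞` in the direction `v`, the
differences `‖z - a‖ - ‖z - b‖` tend to `⟪b - a, v⟫`. As `f` changes each difference of distances
by at most `2 * ε`, it follows that `⟪f x - f y, v⟫` is within `2 * ε` of `⟪x - y, u⟫`. Dividing
by the norm and letting `x` go to infinity in turn makes this an equality of inner products
between directions, so `u ↦ v` extends to a linear isometry `U` once the cluster directions span.
The error `U⁻¹ (f x - f y) - (x - y)` then has inner product at most `2 * ε` with every cluster
direction, and `μ(A)` converts this into a bound on its norm.
-/

section Escape

variable {ι E : Type*} {l : Filter ι} {r : ι → ℝ} {z : ι → E} {v : E}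

lemma tendsto_inv_smul_sub_const [NormedAddCommGroup E] [NormedSpace ℝ E]
    (hr : Tendsto r l atTop) (hz : Tendsto (fun j => (r j)⁻¹ • z j) l (nhds v)) (b : E) :
    Tendsto (fun j => (r j)⁻¹ • (z j - b)) l (nhds v) := by
  simpa [smul_sub] using hz.sub (hr.inv_tendsto_atTop.smul_const b)

variable [NormedAddCommGroup E] [InnerProductSpace ℝ E]

lemma norm_sub_norm_eq_inner_div (x y : E) :
    ‖x‖ - ‖y‖ = ⟪x - y, x + y⟫ / (‖x‖ + ‖y‖) := by
  have hinner : ⟪x - y, x + y⟫ = (‖x‖ - ‖y‖) * (‖x‖ + ‖y‖) := by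
    rw [inner_sub_left, inner_add_right, inner_add_right, real_inner_self_eq_norm_sq,
      real_inner_self_eq_norm_sq, real_inner_comm x y]
    ring
  rcases eq_or_ne (‖x‖ + ‖y‖) 0 with h | h
  · rw [h, div_zero]
    linarith [norm_nonneg x, norm_nonneg y]
  · rw [hinner, mul_div_cancel_right₀ _ h]

lemma tendsto_norm_sub_sub_norm_sub (hr : Tendsto r l atTop)
    (hz : Tendsto (fun j => (r j)⁻¹ • z j) l (nhds v)) (hv : v ≠ 0) (a b : E) :
    Tendsto (fun j => ‖z j - a‖ - ‖z j - b‖) l (nhds (⟪b - a, v⟫ / ‖v‖)) := by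
  have ha := tendsto_inv_smul_sub_const hr hz a
  have hb := tendsto_inv_smul_sub_const hr hz b
  have hlim : ⟪b - a, v + v⟫ / (‖v‖ + ‖v‖) = ⟪b - a, v⟫ / ‖v‖ := by
    rw [inner_add_right, ← two_mul, ← two_mul, mul_div_mul_left _ _ two_ne_zero]
  rw [← hlim]
  refine ((tendsto_const_nhds.inner (ha.add hb)).div (ha.norm.add hb.norm)
    (by positivity)).congr' ?_
  filter_upwards [hr.eventually_gt_atTop 0] with j hj
  rw [norm_sub_norm_eq_inner_div, sub_sub_sub_cancel_left, Pi.div_apply, ← smul_add,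
    real_inner_smul_right, norm_smul, norm_smul, Real.norm_of_nonneg (by positivity), ← mul_add,
    mul_div_mul_left _ _ (by positivity)]

end Escape

section GramMatrix

open scoped InnerProductSpace

variable {𝕜 ι E F : Type*} [RCLike 𝕜] [NormedAddCommGroup E] [InnerProductSpace 𝕜 E]
  [NormedAddCommGroup F] [InnerProductSpace 𝕜 F] {v : ι → E} {w : ι → F}

lemma inner_linearCombination_eq_of_gram_eq (h : Matrix.gram 𝕜 v = Matrix.gram 𝕜 w)
    (c d : ι →₀ 𝕜) :
    ⟪Finsupp.linearCombination 𝕜 w c, Finsupp.linearCombination 𝕜 w d⟫_𝕜 =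
      ⟪Finsupp.linearCombination 𝕜 v c, Finsupp.linearCombination 𝕜 v d⟫_𝕜 := by
  have hvw (i j : ι) : ⟪w i, w j⟫_𝕜 = ⟪v i, v j⟫_𝕜 := (congrFun₂ h i j).symm
  simp only [Finsupp.linearCombination_apply, Finsupp.sum, sum_inner, inner_sum, inner_smul_left,
    inner_smul_right, hvw]

lemma exists_linearIsometry_of_gram_eq (hv : Submodule.span 𝕜 (Set.range v) = ⊤)
    (h : Matrix.gram 𝕜 v = Matrix.gram 𝕜 w) :
    ∃ U : E →ₗᵢ[𝕜] F, ∀ i, U (v i) = w i := by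
  let V := Finsupp.linearCombination 𝕜 v
  let W := Finsupp.linearCombination 𝕜 w
  obtain ⟨R, hR⟩ := V.exists_rightInverse_of_surjective
    ((Finsupp.range_linearCombination 𝕜).trans hv)
  have hVR (x : E) : V (R x) = x := LinearMap.congr_fun hR x
  have hinner (c d : ι →₀ 𝕜) : ⟪W c, W d⟫_𝕜 = ⟪V c, V d⟫_𝕜 :=
    inner_linearCombination_eq_of_gram_eq h c d
  refine ⟨(W ∘ₗ R).isometryOfInner fun x y => by simp [hinner, hVR], fun i => ?_⟩
  have hker : V (R (v i) - Finsupp.single i 1) = 0 := by simp [hVR, V]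
  have hWker : W (R (v i) - Finsupp.single i 1) = 0 := by
    rw [← inner_self_eq_zero (𝕜 := 𝕜), hinner, hker, inner_zero_left]
  simpa [W, sub_eq_zero] using hWker

end GramMatrix

section ClusterDirection

lemma IsClusterDirection.norm_eq_one {E : Type*} [NormedAddCommGroup E] [NormedSpace ℝ E]
    {A : Set E} {u : E} (h : IsClusterDirection A u) : ‖u‖ = 1 := by
  obtain ⟨x, -, hx, hu⟩ := h
  refine tendsto_nhds_unique hu.norm (tendsto_const_nhds.congr' ?_)
  filter_upwards [hx.eventually_gt_atTop 0] with j hj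
  rw [norm_smul, norm_inv, norm_norm, inv_mul_cancel₀ hj.ne']

variable {E : Type*} [NormedAddCommGroup E] [InnerProductSpace ℝ E] {A : Set E}

lemma muDir_mul_norm_le {w : E} {c : ℝ} (hc : 0 ≤ c)
    (h : ∀ u, IsClusterDirection A u → |⟪u, w⟫| ≤ c) : muDir A * ‖w‖ ≤ c := by
  rcases eq_or_ne w 0 with rfl | hw
  · simpa using hc
  rw [← le_div_iff₀ (norm_pos_iff.2 hw)]
  refine csInf_le_of_le ⟨0, ?_⟩ ⟨‖w‖⁻¹ • w, norm_smul_inv_norm hw, rfl⟩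
    (Real.sSup_le ?_ (by positivity))
  · rintro _ ⟨e, -, rfl⟩
    exact Real.sSup_nonneg (by rintro _ ⟨u, -, rfl⟩; exact abs_nonneg _)
  · rintro _ ⟨u, hu, rfl⟩
    rw [real_inner_smul_right, abs_mul, abs_inv, abs_norm, inv_mul_eq_div]
    gcongr
    exact h u hu

lemma span_isClusterDirection_eq_top [FiniteDimensional ℝ E] (hA : 0 < muDir A) :
    Submodule.span ℝ {u | IsClusterDirection A u} = ⊤ := by
  rw [← Submodule.orthogonal_eq_bot_iff, Submodule.eq_bot_iff]
  intro w hw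
  have hmul : muDir A * ‖w‖ ≤ 0 := muDir_mul_norm_le le_rfl fun u hu => by
    rw [(Submodule.mem_orthogonal _ _).1 hw u (Submodule.subset_span hu), abs_zero]
  exact norm_le_zero_iff.1 (nonpos_of_mul_nonpos_right hmul hA)

end ClusterDirection

/-- `v` is an image under `f` of the cluster direction `u` of `A`: some sequence in `A` escapes to
infinity in the direction `u` while its image under `f` escapes in the direction `v`. The image
sequence is scaled by `‖x j‖` rather than `‖f (x j)‖`, which makes no difference in the limit when
`f` is a nearisometry. -/
def IsImageDirection {E F : Type*} [NormedAddCommGroup E] [NormedSpace ℝ E]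
    [NormedAddCommGroup F] [NormedSpace ℝ F] (f : E → F) (A : Set E) (u : E) (v : F) : Prop :=
  ∃ x : ℕ → E, (∀ j, x j ∈ A) ∧ Tendsto (fun j => ‖x j‖) atTop atTop ∧
    Tendsto (fun j => ‖x j‖⁻¹ • x j) atTop (nhds u) ∧
    Tendsto (fun j => ‖x j‖⁻¹ • f (x j)) atTop (nhds v)

lemma IsNearisometryOn.nonneg {E F : Type*} [NormedAddCommGroup E] [NormedAddCommGroup F]
    {f : E → F} {A : Set E} {ε : ℝ} (hf : IsNearisometryOn f A ε) {a : E} (ha : a ∈ A) : 0 ≤ ε :=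
  (abs_nonneg _).trans (hf a ha a ha)

section NormedSpace

variable {E F : Type*} [NormedAddCommGroup E] [NormedSpace ℝ E]
  [NormedAddCommGroup F] [NormedSpace ℝ F] {f : E → F} {A : Set E} {ε : ℝ} {u : E} {v : F}

lemma IsImageDirection.isClusterDirection (h : IsImageDirection f A u v) :
    IsClusterDirection A u :=
  let ⟨x, hxA, hx, hu, _⟩ := h
  ⟨x, hxA, hx, hu⟩

lemma IsNearisometryOn.exists_isImageDirection [ProperSpace F] (hf : IsNearisometryOn f A ε)
    (hu : IsClusterDirection A u) : ∃ v, IsImageDirection f A u v := by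
  obtain ⟨x, hxA, hx, hu⟩ := hu
  have hbounded : ∀ᶠ j in atTop, ‖x j‖⁻¹ • f (x j) ∈ closedBall (0 : F) 2 := by
    filter_upwards [hx.eventually_gt_atTop 0, hx.eventually_ge_atTop (‖x 0‖ + ‖f (x 0)‖ + ε)]
      with j hpos hlarge
    have hdist := (abs_le.1 (hf (x j) (hxA j) (x 0) (hxA 0))).2
    rw [mem_closedBall_zero_iff, norm_smul, norm_inv, norm_norm, inv_mul_le_iff₀ hpos]
    linarith [norm_sub_le (x j) (x 0), norm_sub_norm_le (f (x j)) (f (x 0))]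
  obtain ⟨v, -, φ, hφ, hv⟩ :=
    (isCompact_closedBall (0 : F) 2).tendsto_subseq' hbounded.frequently
  exact ⟨v, x ∘ φ, fun j => hxA _, hx.comp hφ.tendsto_atTop, hu.comp hφ.tendsto_atTop, hv⟩

lemma IsNearisometryOn.norm_imageDirection (hf : IsNearisometryOn f A ε)
    (h : IsImageDirection f A u v) : ‖v‖ = 1 := by
  rw [← h.isClusterDirection.norm_eq_one, ← sub_eq_zero]
  obtain ⟨x, hxA, hx, hu, hv⟩ := h
  have hlim := (tendsto_inv_smul_sub_const hx hv (f (x 0))).norm.sub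
    (tendsto_inv_smul_sub_const hx hu (x 0)).norm
  simp only [norm_smul, norm_inv, norm_norm, ← mul_sub] at hlim
  exact tendsto_nhds_unique hlim <| hx.inv_tendsto_atTop.zero_mul_isBoundedUnder_le <|
    isBoundedUnder_of ⟨ε, fun j => hf (x j) (hxA j) (x 0) (hxA 0)⟩

end NormedSpace

section InnerProductSpace

variable {E F : Type*} [NormedAddCommGroup E] [InnerProductSpace ℝ E]
  [NormedAddCommGroup F] [InnerProductSpace ℝ F] {f : E → F} {A : Set E} {ε : ℝ}

lemma IsNearisometryOn.abs_inner_sub_inner_le (hf : IsNearisometryOn f A ε) {u : E} {v : F}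
    (h : IsImageDirection f A u v) {a b : E} (ha : a ∈ A) (hb : b ∈ A) :
    |⟪f a - f b, v⟫ - ⟪a - b, u⟫| ≤ 2 * ε := by
  have hv := hf.norm_imageDirection h
  have hu := h.isClusterDirection.norm_eq_one
  obtain ⟨x, hxA, hx, hxu, hxv⟩ := h
  have hu0 : u ≠ 0 := norm_ne_zero_iff.1 (hu ▸ one_ne_zero)
  have hv0 : v ≠ 0 := norm_ne_zero_iff.1 (hv ▸ one_ne_zero)
  have hlim : Tendsto
      (fun j => |(‖f (x j) - f b‖ - ‖f (x j) - f a‖) - (‖x j - b‖ - ‖x j - a‖)|)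
      atTop (nhds |⟪f a - f b, v⟫ - ⟪a - b, u⟫|) := by
    simpa only [hu, hv, div_one] using
      ((tendsto_norm_sub_sub_norm_sub hx hxv hv0 (f b) (f a)).sub
        (tendsto_norm_sub_sub_norm_sub hx hxu hu0 b a)).abs
  refine le_of_tendsto hlim (Eventually.of_forall fun j => ?_)
  calc |(‖f (x j) - f b‖ - ‖f (x j) - f a‖) - (‖x j - b‖ - ‖x j - a‖)|
    _ = |(‖f (x j) - f b‖ - ‖x j - b‖) - (‖f (x j) - f a‖ - ‖x j - a‖)| := by
      rw [sub_sub_sub_comm]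
    _ ≤ ε + ε := (abs_sub _ _).trans (add_le_add (hf _ (hxA j) _ hb) (hf _ (hxA j) _ ha))
    _ = 2 * ε := (two_mul ε).symm

lemma IsNearisometryOn.inner_imageDirection (hf : IsNearisometryOn f A ε) {u u' : E} {v v' : F}
    (h : IsImageDirection f A u v) (h' : IsImageDirection f A u' v') :
    ⟪v, v'⟫ = ⟪u, u'⟫ := by
  obtain ⟨x, hxA, hx, hu, hv⟩ := h
  have hlim : Tendsto
      (fun j => ⟪‖x j‖⁻¹ • (f (x j) - f (x 0)), v'⟫ - ⟪‖x j‖⁻¹ • (x j - x 0), u'⟫)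
      atTop (nhds (⟪v, v'⟫ - ⟪u, u'⟫)) :=
    ((tendsto_inv_smul_sub_const hx hv _).inner tendsto_const_nhds).sub
      ((tendsto_inv_smul_sub_const hx hu _).inner tendsto_const_nhds)
  simp only [real_inner_smul_left, ← mul_sub] at hlim
  exact sub_eq_zero.1 <| tendsto_nhds_unique hlim <|
    hx.inv_tendsto_atTop.zero_mul_isBoundedUnder_le <|
      isBoundedUnder_of ⟨2 * ε, fun j => hf.abs_inner_sub_inner_le h' (hxA j) (hxA 0)⟩

variable [FiniteDimensional ℝ E] [FiniteDimensional ℝ F]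

lemma IsNearisometryOn.exists_linearIsometry_imageDirection (hf : IsNearisometryOn f A ε)
    (hA : 0 < muDir A) : ∃ U : E →ₗᵢ[ℝ] F, ∀ u v, IsImageDirection f A u v → U u = v := by
  let I := {p : E × F // IsImageDirection f A p.1 p.2}
  have hspan : Submodule.span ℝ (Set.range fun p : I => p.1.1) = ⊤ := by
    refine top_unique ((span_isClusterDirection_eq_top hA).ge.trans (Submodule.span_mono ?_))
    intro u hu
    obtain ⟨v, hv⟩ := hf.exists_isImageDirection hu
    exact ⟨⟨(u, v), hv⟩, rfl⟩
  have hgram : Matrix.gram ℝ (fun p : I => p.1.1) = Matrix.gram ℝ fun p : I => p.1.2 := by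
    ext p q
    exact (hf.inner_imageDirection p.2 q.2).symm
  obtain ⟨U, hU⟩ := exists_linearIsometry_of_gram_eq hspan hgram
  exact ⟨U, fun u v h => hU ⟨(u, v), h⟩⟩

theorem exists_linearIsometry_approx_euclidean_general
    (hEF : Module.finrank ℝ E = Module.finrank ℝ F) {c' : ℝ} (hc' : 0 < c')
    (hmu : 1 / c' ≤ muDir A) (hf : IsNearisometryOn f A ε) :
    ∃ U : E ≃ₗᵢ[ℝ] F, ∀ x ∈ A, ∀ y ∈ A, ‖U (x - y) - (f x - f y)‖ ≤ 2 * c' * ε := by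
  obtain ⟨T, hT⟩ := hf.exists_linearIsometry_imageDirection ((one_div_pos.2 hc').trans_le hmu)
  let U := T.toLinearIsometryEquiv hEF
  refine ⟨U, fun x hx y hy => ?_⟩
  set w := U.symm (f x - f y) - (x - y) with hw
  have hUw : U w = (f x - f y) - U (x - y) := by simp [hw]
  have hinner (u : E) (hu : IsClusterDirection A u) : |⟪u, w⟫| ≤ 2 * ε := by
    obtain ⟨v, hv⟩ := hf.exists_isImageDirection hu
    have hUu : U u = v := hT u v hv
    rw [← U.inner_map_map, hUw, inner_sub_right, U.inner_map_map, hUu, real_inner_comm,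
      real_inner_comm (x - y)]
    exact hf.abs_inner_sub_inner_le hv hx hy
  have hnorm : 1 / c' * ‖w‖ ≤ 2 * ε :=
    (mul_le_mul_of_nonneg_right hmu (norm_nonneg w)).trans
      (muDir_mul_norm_le (by linarith [hf.nonneg hx]) hinner)
  rw [norm_sub_rev, ← hUw, U.norm_map]
  rw [one_div_mul_eq_div, div_le_iff₀ hc'] at hnorm
  linarith

end InnerProductSpace

/-- Corollary 4.9: if `A ⊆ ℝⁿ` is unbounded with `0 ∈ A` and `μ(A) ≥ 1/c'`, and
`f : A → ℝⁿ` is an `ε`-nearisometry with `f 0 = 0`, then there is a linear isometry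
`U : ℝⁿ → ℝⁿ` with `|U x - f x| ≤ 2 c' ε` for all `x ∈ A`. -/
theorem exists_linearIsometry_approx_euclidean {n : ℕ} (hn : 1 ≤ n)
    (c' : ℝ) (hc' : 0 < c') (A : Set (EuclideanSpace ℝ (Fin n)))
    (hA : ¬ IsBounded A) (h0A : (0 : EuclideanSpace ℝ (Fin n)) ∈ A)
    (hmu : 1 / c' ≤ muDir A)
    (f : EuclideanSpace ℝ (Fin n) → EuclideanSpace ℝ (Fin n)) (ε : ℝ) (hε : 0 ≤ ε)
    (hf : IsNearisometryOn f A ε) (hf0 : f 0 = 0) :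
    ∃ U : EuclideanSpace ℝ (Fin n) →ₗᵢ[ℝ] EuclideanSpace ℝ (Fin n),
      ∀ x ∈ A, ‖U x - f x‖ ≤ 2 * c' * ε := by
  obtain ⟨U, hU⟩ := exists_linearIsometry_approx_euclidean_general rfl hc' hmu hf
  exact ⟨U.toLinearIsometry, fun x hx => by simpa [hf0] using hU x hx 0 h0A⟩
end

section
/- Let E be a real Banach space, F a real Hilbert space, and f : E → F an ε-nearisometry for some ε ≥ 0 with f 0 = 0 and τ(f(E)) < 1. Then there is a surjective linear isometry T : E → F with |T x − f x| ≤ 2ε for all x ∈ E. -/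
open Filter Metric Bornology

/-- `τ(B) = sup_{|e|=1} liminf_{|t|→∞} dist(t e, B)/|t|`. -/
noncomputable def tauSet {F : Type*} [NormedAddCommGroup F] [NormedSpace ℝ F]
    (B : Set F) : ℝ :=
  sSup {s | ∃ e : F, ‖e‖ = 1 ∧
    s = liminf (fun t : ℝ => infDist (t • e) B / |t|) (cocompact ℝ)}

/-!
Stewart's identity in the triangle `0`, `f x`, `f (t • x)`, combined with the nearisometry bounds on
its sides, gives `‖f (t • x) / t - f x‖ ^ 2 ≤ 6 ε ‖x‖ + ε ^ 2` for every `t ≥ 1`. Applied to all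
the rescalings of `f`, this makes `f (t • x) / t` Cauchy as `t → ∞`. Its limit `T x` is an isometry
of `E` into a strictly convex space, hence linear, and `f x - T x` grows at most like `√‖x‖`.

If `T` were not onto, a unit vector `e` orthogonal to its closed range would satisfy
`dist (t • e, f E) ≥ |t| - O(√|t|)`, forcing `τ (f E) ≥ 1`.

Finally, `‖p - q‖ - ‖q‖` tends to `-⟪p, a⟫ / ‖a‖` when `q` goes to infinity in the direction `a`.
Comparing this for `p = f x`, `q = f (t • w)` and for `p = T x`, `q = T (t • w)`, the nearisometry
inequality, used once for `(x, t • w)` and once for `(t • w, 0)`, gives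
`⟪T x - f x, T w⟫ ≤ 2 ε ‖w‖`. Surjectivity allows `T w = T x - f x`.
-/

section InnerProductSpace

variable {F : Type*} [NormedAddCommGroup F] [InnerProductSpace ℝ F]

lemma norm_sub_smul_sq (t : ℝ) (u v : F) :
    ‖v - t • u‖ ^ 2 = t * (t - 1) * ‖u‖ ^ 2 - (t - 1) * ‖v‖ ^ 2 + t * ‖v - u‖ ^ 2 := by
  rw [norm_sub_sq_real, norm_sub_sq_real, norm_smul, inner_smul_right, mul_pow, Real.norm_eq_abs,
    sq_abs]
  ring

lemma norm_le_norm_sub_of_inner_eq_zero {u v : F} (h : inner ℝ u v = 0) : ‖u‖ ≤ ‖u - v‖ := by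
  refine le_of_sq_le_sq ?_ (norm_nonneg _)
  rw [norm_sub_sq_real, h]
  nlinarith [sq_nonneg ‖v‖]

lemma norm_sub_sub_norm_eq_div (p : F) {q : F} (hq : q ≠ 0) :
    ‖p - q‖ - ‖q‖ = (‖p‖ ^ 2 - 2 * inner ℝ p q) / (‖p - q‖ + ‖q‖) := by
  have hpos : 0 < ‖p - q‖ + ‖q‖ := add_pos_of_nonneg_of_pos (norm_nonneg _) (norm_pos_iff.2 hq)
  rw [eq_div_iff hpos.ne']
  linear_combination norm_sub_sq_real p q

lemma tendsto_norm_sub_smul_sub_norm_smul {ι : Type*} {l : Filter ι} {c : ι → ℝ} {y : ι → F}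
    {a : F} (ha : a ≠ 0) (hc : Tendsto c l atTop) (hy : Tendsto y l (nhds a)) (p : F) :
    Tendsto (fun i => ‖p - c i • y i‖ - ‖c i • y i‖) l (nhds (-inner ℝ p a / ‖a‖)) := by
  have hc0 : Tendsto (fun i => (c i)⁻¹) l (nhds 0) := hc.inv_tendsto_atTop
  have hnum : Tendsto (fun i => (c i)⁻¹ * ‖p‖ ^ 2 - 2 * inner ℝ p (y i)) l
      (nhds (0 * ‖p‖ ^ 2 - 2 * inner ℝ p a)) :=
    (hc0.mul_const _).sub ((tendsto_const_nhds.inner hy).const_mul 2)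
  have hden : Tendsto (fun i => ‖(c i)⁻¹ • p - y i‖ + ‖y i‖) l
      (nhds (‖(0 : ℝ) • p - a‖ + ‖a‖)) :=
    ((hc0.smul_const p).sub hy).norm.add hy.norm
  have hlim := hnum.div hden (by simpa using ha)
  have hval : (0 * ‖p‖ ^ 2 - 2 * inner ℝ p a) / (‖(0 : ℝ) • p - a‖ + ‖a‖)
      = -inner ℝ p a / ‖a‖ := by
    rw [zero_smul, zero_sub, norm_neg, ← two_mul, zero_mul, zero_sub, ← mul_neg,
      mul_div_mul_left _ _ two_ne_zero]
  rw [hval] at hlim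
  refine hlim.congr' ?_
  filter_upwards [hc.eventually_gt_atTop 0, hy.eventually_ne ha] with i hci hyi
  have hnorm : ‖p - c i • y i‖ = c i * ‖(c i)⁻¹ • p - y i‖ := by
    rw [← norm_smul_of_nonneg hci.le, smul_sub, smul_inv_smul₀ hci.ne']
  rw [norm_sub_sub_norm_eq_div p (smul_ne_zero hci.ne' hyi), hnorm, norm_smul_of_nonneg hci.le,
    inner_smul_right, ← mul_add, Pi.div_apply, ← mul_div_mul_left _ _ hci.ne', mul_sub,
    mul_inv_cancel_left₀ hci.ne', mul_left_comm]

lemma exists_norm_eq_one_inner_eq_zero_of_not_surjective {E : Type*} [NormedAddCommGroup E]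
    [NormedSpace ℝ E] [CompleteSpace E] {T : E →ₗᵢ[ℝ] F} (hT : ¬ Function.Surjective T) :
    ∃ e : F, ‖e‖ = 1 ∧ ∀ x, inner ℝ e (T x) = 0 := by
  set K : Submodule ℝ F := T.toLinearMap.range
  have hK : CompleteSpace K := T.isometry.isUniformInducing.isComplete_range.completeSpace_coe
  have hbot : Kᗮ ≠ ⊥ := fun h =>
    hT (LinearMap.range_eq_top.1 (Submodule.orthogonal_eq_bot_iff.1 h))
  obtain ⟨v, hv, hv0⟩ := Submodule.exists_mem_ne_zero_of_ne_bot hbot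
  refine ⟨‖v‖⁻¹ • v, norm_smul_inv_norm (𝕜 := ℝ) hv0, fun x => ?_⟩
  rw [real_inner_smul_left, (K.mem_orthogonal' v).1 hv (T x) ⟨x, rfl⟩, mul_zero]

end InnerProductSpace

section Tau

variable {F : Type*} [NormedAddCommGroup F] [NormedSpace ℝ F] {B : Set F}

lemma infDist_smul_div_abs_le_norm (hB : 0 ∈ B) (e : F) (t : ℝ) :
    infDist (t • e) B / |t| ≤ ‖e‖ := by
  refine div_le_of_le_mul₀ (abs_nonneg t) (norm_nonneg e) ?_
  calc infDist (t • e) B ≤ dist (t • e) 0 := infDist_le_dist_of_mem hB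
    _ = ‖e‖ * |t| := by rw [dist_zero_right, norm_smul, Real.norm_eq_abs, mul_comm]

lemma liminf_infDist_le_tauSet (hB : 0 ∈ B) {e : F} (he : ‖e‖ = 1) :
    liminf (fun t : ℝ => infDist (t • e) B / |t|) (cocompact ℝ) ≤ tauSet B := by
  refine le_csSup ⟨1, ?_⟩ ⟨e, he, rfl⟩
  rintro _ ⟨v, hv, rfl⟩
  refine liminf_le_of_frequently_le (Frequently.of_forall fun t => ?_)
    (isBoundedUnder_of ⟨0, fun t => div_nonneg infDist_nonneg (abs_nonneg t)⟩)
  exact hv ▸ infDist_smul_div_abs_le_norm hB v t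

end Tau

section Rescale

variable {E F : Type*} [NormedAddCommGroup E] [NormedSpace ℝ E]
  [NormedAddCommGroup F] [NormedSpace ℝ F] {f : E → F}

/-- The rescaling `x ↦ f (t • x) / t` of `f`, which reads the values of `f` at scale `t`. It is
meaningful for `t ≠ 0` only. -/
noncomputable def rescale (f : E → F) (t : ℝ) (x : E) : F := t⁻¹ • f (t • x)

lemma rescale_one (f : E → F) : rescale f 1 = f := by
  funext x
  rw [rescale, inv_one, one_smul, one_smul]

lemma rescale_apply_zero (hf0 : f 0 = 0) (t : ℝ) : rescale f t 0 = 0 := by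
  rw [rescale, smul_zero, hf0, smul_zero]

lemma rescale_rescale (f : E → F) (s t : ℝ) : rescale (rescale f s) t = rescale f (s * t) := by
  funext x
  rw [rescale, rescale, rescale, smul_smul, smul_smul, mul_inv_rev]

lemma smul_rescale {t : ℝ} (ht : t ≠ 0) (x : E) : t • rescale f t x = f (t • x) :=
  smul_inv_smul₀ ht _

/-- `g` is the limit at infinity of the rescalings of `f`, i.e. `f (t • x) / t → g x` as `t → ∞`. -/
def IsAsymptote (f g : E → F) : Prop :=
  ∀ x, Tendsto (fun t : ℝ => rescale f t x) atTop (nhds (g x))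

end Rescale

namespace IsNearisometryOn

section Normed

variable {E F : Type*} [NormedAddCommGroup E] [NormedAddCommGroup F]
  {f : E → F} {A : Set E} {ε : ℝ} {x y : E}

lemma nonneg_s17 (hf : IsNearisometryOn f A ε) (hA : A.Nonempty) : 0 ≤ ε :=
  let ⟨x, hx⟩ := hA
  (abs_nonneg _).trans (hf x hx x hx)

lemma norm_map_sub_le (hf : IsNearisometryOn f A ε) (hx : x ∈ A) (hy : y ∈ A) :
    ‖f x - f y‖ ≤ ‖x - y‖ + ε := by
  linarith [(abs_le.1 (hf x hx y hy)).2]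

lemma norm_sub_le (hf : IsNearisometryOn f A ε) (hx : x ∈ A) (hy : y ∈ A) :
    ‖x - y‖ ≤ ‖f x - f y‖ + ε := by
  linarith [(abs_le.1 (hf x hx y hy)).1]

lemma norm_map_le (hf : IsNearisometryOn f A ε) (hA : 0 ∈ A) (hf0 : f 0 = 0) (hx : x ∈ A) :
    ‖f x‖ ≤ ‖x‖ + ε := by
  simpa only [hf0, sub_zero] using hf.norm_map_sub_le hx hA

lemma norm_le (hf : IsNearisometryOn f A ε) (hA : 0 ∈ A) (hf0 : f 0 = 0) (hx : x ∈ A) :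
    ‖x‖ ≤ ‖f x‖ + ε := by
  simpa only [hf0, sub_zero] using hf.norm_sub_le hx hA

lemma isometry_of_tendsto {ι : Type*} {l : Filter ι} [l.NeBot] {φ : ι → E → F} {η : ι → ℝ}
    {g : E → F} (hφ : ∀ᶠ i in l, IsNearisometryOn (φ i) Set.univ (η i))
    (hη : Tendsto η l (nhds 0)) (hg : ∀ x, Tendsto (fun i => φ i x) l (nhds (g x))) :
    Isometry g := by
  refine Isometry.of_dist_eq fun x y => tendsto_nhds_unique ((hg x).dist (hg y)) ?_
  refine tendsto_iff_dist_tendsto_zero.2 (squeeze_zero' (.of_forall fun _ => dist_nonneg) ?_ hη)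
  filter_upwards [hφ] with i hi
  simpa only [dist_eq_norm, Real.norm_eq_abs] using hi x trivial y trivial

end Normed

section NormedSpace

variable {E F : Type*} [NormedAddCommGroup E] [NormedSpace ℝ E]
  [NormedAddCommGroup F] [NormedSpace ℝ F] {f : E → F} {A : Set E} {ε : ℝ}

lemma rescale_preimage (hf : IsNearisometryOn f A ε) {t : ℝ} (ht : 0 < t) :
    IsNearisometryOn (rescale f t) ((t • ·) ⁻¹' A) (ε / t) := by
  intro x hx y hy
  have hdiff : ‖rescale f t x - rescale f t y‖ - ‖x - y‖
      = t⁻¹ * (‖f (t • x) - f (t • y)‖ - ‖t • x - t • y‖) := by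
    rw [rescale, rescale, ← smul_sub, ← smul_sub, norm_smul_of_nonneg (inv_nonneg.2 ht.le),
      norm_smul_of_nonneg ht.le, mul_sub, inv_mul_cancel_left₀ ht.ne']
  rw [hdiff, abs_mul, abs_of_pos (inv_pos.2 ht), div_eq_inv_mul]
  gcongr
  exact hf _ hx _ hy

lemma exists_linearIsometry_eq_of_isAsymptote [StrictConvexSpace ℝ F] {g : E → F}
    (hf : IsNearisometryOn f Set.univ ε) (hf0 : f 0 = 0) (hg : IsAsymptote f g) :
    ∃ T : E →ₗᵢ[ℝ] F, ⇑T = g := by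
  have hnear : ∀ᶠ t : ℝ in atTop, IsNearisometryOn (rescale f t) Set.univ (ε / t) :=
    (eventually_gt_atTop 0).mono fun t ht => hf.rescale_preimage ht
  have hiso : Isometry g := isometry_of_tendsto hnear (tendsto_const_nhds.div_atTop tendsto_id) hg
  have hg0 : g 0 = 0 :=
    tendsto_nhds_unique (hg 0) (tendsto_const_nhds.congr fun t => (rescale_apply_zero hf0 t).symm)
  refine ⟨hiso.affineIsometryOfStrictConvexSpace.linearIsometry, funext fun x => ?_⟩
  simpa [hg0] using (hiso.affineIsometryOfStrictConvexSpace.map_vadd 0 x).symm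

end NormedSpace

section InnerProductSpace

variable {E F : Type*} [NormedAddCommGroup E] [NormedSpace ℝ E]
  [NormedAddCommGroup F] [InnerProductSpace ℝ F] {f g : E → F} {ε : ℝ}

lemma norm_rescale_sub_sq_le (hf : IsNearisometryOn f Set.univ ε) (hf0 : f 0 = 0) {t : ℝ}
    (ht : 1 ≤ t) (x : E) : ‖rescale f t x - f x‖ ^ 2 ≤ 6 * ε * ‖x‖ + ε ^ 2 := by
  have hε := hf.nonneg_s17 ⟨0, trivial⟩
  have ht0 : 0 < t := one_pos.trans_le ht
  have hu : ‖f x‖ ≤ ‖x‖ + ε := hf.norm_map_le trivial hf0 trivial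
  have hv : t * ‖x‖ - ε ≤ ‖f (t • x)‖ := by
    rw [← norm_smul_of_nonneg ht0.le, sub_le_iff_le_add]
    exact hf.norm_le trivial hf0 trivial
  have huv : ‖f (t • x) - f x‖ ≤ (t - 1) * ‖x‖ + ε := by
    rw [← norm_smul_of_nonneg (sub_nonneg.2 ht), sub_smul, one_smul]
    exact hf.norm_map_sub_le trivial trivial
  have hv_sq : t ^ 2 * ‖x‖ ^ 2 - 2 * t * ‖x‖ * ε ≤ ‖f (t • x)‖ ^ 2 := by
    nlinarith [sq_nonneg (‖f (t • x)‖ - t * ‖x‖), mul_nonneg ht0.le (norm_nonneg x)]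
  have hscaled : t ^ 2 * ‖rescale f t x - f x‖ ^ 2 = ‖f (t • x) - t • f x‖ ^ 2 := by
    rw [← mul_pow, ← norm_smul_of_nonneg ht0.le, smul_sub, smul_rescale ht0.ne']
  refine le_of_mul_le_mul_left ?_ (pow_pos ht0 2)
  calc t ^ 2 * ‖rescale f t x - f x‖ ^ 2
      = t * (t - 1) * ‖f x‖ ^ 2 - (t - 1) * ‖f (t • x)‖ ^ 2 + t * ‖f (t • x) - f x‖ ^ 2 := by
        rw [hscaled, norm_sub_smul_sq]
    _ ≤ t * (t - 1) * (‖x‖ + ε) ^ 2 - (t - 1) * (t ^ 2 * ‖x‖ ^ 2 - 2 * t * ‖x‖ * ε)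
          + t * ((t - 1) * ‖x‖ + ε) ^ 2 := by
        have := sub_nonneg.2 ht
        gcongr
    _ = t ^ 2 * (6 * ε * ‖x‖ + ε ^ 2) - 6 * t * ε * ‖x‖ := by ring
    _ ≤ t ^ 2 * (6 * ε * ‖x‖ + ε ^ 2) := sub_le_self _ (by positivity)

lemma dist_rescale_le (hf : IsNearisometryOn f Set.univ ε) (hf0 : f 0 = 0) {s t : ℝ}
    (hs : 0 < s) (hst : s ≤ t) (x : E) :
    dist (rescale f t x) (rescale f s x) ≤ √(6 * (ε / s) * ‖x‖ + (ε / s) ^ 2) := by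
  have h := (hf.rescale_preimage hs).norm_rescale_sub_sq_le (rescale_apply_zero hf0 s)
    ((one_le_div hs).2 hst) x
  rw [rescale_rescale, mul_div_cancel₀ t hs.ne'] at h
  rw [dist_eq_norm]
  exact Real.le_sqrt_of_sq_le h

lemma cauchySeq_rescale (hf : IsNearisometryOn f Set.univ ε) (hf0 : f 0 = 0) (x : E) :
    CauchySeq fun t : ℝ => rescale f t x := by
  have hbound : Tendsto (fun s : ℝ => √(6 * (ε / s) * ‖x‖ + (ε / s) ^ 2)) atTop (nhds 0) := by
    have hdiv : Tendsto (fun s : ℝ => ε / s) atTop (nhds 0) :=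
      tendsto_const_nhds.div_atTop tendsto_id
    simpa using (((hdiv.const_mul 6).mul_const ‖x‖).add (hdiv.pow 2)).sqrt
  refine Metric.cauchySeq_iff'.2 fun δ hδ => ?_
  obtain ⟨s, hs, hsδ⟩ := ((eventually_gt_atTop 0).and (hbound.eventually_lt_const hδ)).exists
  exact ⟨s, fun t hst => (hf.dist_rescale_le hf0 hs hst x).trans_lt hsδ⟩

lemma exists_isAsymptote [CompleteSpace F] (hf : IsNearisometryOn f Set.univ ε) (hf0 : f 0 = 0) :
    ∃ T : E →ₗᵢ[ℝ] F, IsAsymptote f T := by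
  choose g hg using fun x => cauchySeq_tendsto_of_complete (hf.cauchySeq_rescale hf0 x)
  obtain ⟨T, rfl⟩ := hf.exists_linearIsometry_eq_of_isAsymptote hf0 hg
  exact ⟨T, hg⟩

lemma norm_asymptote_sub_le (hf : IsNearisometryOn f Set.univ ε) (hf0 : f 0 = 0)
    (hg : IsAsymptote f g) (x : E) : ‖g x - f x‖ ≤ √(6 * ε * ‖x‖ + ε ^ 2) := by
  refine le_of_tendsto ((hg x).sub_const (f x)).norm ?_
  filter_upwards [eventually_ge_atTop 1] with t ht
  exact Real.le_sqrt_of_sq_le (hf.norm_rescale_sub_sq_le hf0 ht x)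

lemma le_infDist_range_of_inner_eq_zero (hf : IsNearisometryOn f Set.univ ε) (hf0 : f 0 = 0)
    (hg : IsAsymptote f g) {y : F} (hy : ∀ x, inner ℝ y (g x) = 0) :
    ‖y‖ - √(6 * ε * (2 * ‖y‖ + ε) + ε ^ 2) ≤ infDist y (Set.range f) := by
  refine (le_infDist (Set.range_nonempty f)).2 ?_
  rintro _ ⟨x, rfl⟩
  rw [dist_eq_norm]
  rcases le_total ‖y‖ ‖y - f x‖ with hfar | hnear
  · exact (sub_le_self _ (Real.sqrt_nonneg _)).trans hfar
  have hε := hf.nonneg_s17 ⟨0, trivial⟩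
  have hx : ‖x‖ ≤ 2 * ‖y‖ + ε := by
    linarith [hf.norm_le trivial hf0 (Set.mem_univ x), norm_le_norm_add_norm_sub' (f x) y,
      norm_sub_rev (f x) y]
  have hgf : ‖g x - f x‖ ≤ √(6 * ε * (2 * ‖y‖ + ε) + ε ^ 2) :=
    (hf.norm_asymptote_sub_le hf0 hg x).trans (Real.sqrt_le_sqrt (by gcongr))
  have hyg : ‖y‖ ≤ ‖y - g x‖ := norm_le_norm_sub_of_inner_eq_zero (hy x)
  linarith [norm_sub_le_norm_sub_add_norm_sub y (f x) (g x), norm_sub_rev (f x) (g x)]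

lemma tendsto_infDist_smul_div_abs (hf : IsNearisometryOn f Set.univ ε) (hf0 : f 0 = 0)
    (hg : IsAsymptote f g) {e : F} (he : ‖e‖ = 1) (horth : ∀ x, inner ℝ e (g x) = 0) :
    Tendsto (fun t : ℝ => infDist (t • e) (Set.range f) / |t|) (cocompact ℝ) (nhds 1) := by
  have habs : Tendsto (fun t : ℝ => |t|) (cocompact ℝ) atTop := tendsto_norm_cocompact_atTop
  have hlower : Tendsto (fun t : ℝ => 1 - √(12 * (ε / |t|) + 7 * (ε / |t|) ^ 2)) (cocompact ℝ)
      (nhds 1) := by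
    have hdiv : Tendsto (fun t : ℝ => ε / |t|) (cocompact ℝ) (nhds 0) :=
      tendsto_const_nhds.div_atTop habs
    simpa using ((hdiv.const_mul 12).add ((hdiv.pow 2).const_mul 7)).sqrt.const_sub 1
  refine tendsto_of_tendsto_of_tendsto_of_le_of_le' hlower tendsto_const_nhds ?_
    (.of_forall fun t => he ▸ infDist_smul_div_abs_le_norm (Set.mem_range.2 ⟨0, hf0⟩) e t)
  filter_upwards [habs.eventually_gt_atTop 0] with t ht
  have h := hf.le_infDist_range_of_inner_eq_zero hf0 hg (y := t • e) fun x => by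
    rw [real_inner_smul_left, horth, mul_zero]
  rw [norm_smul, he, mul_one, Real.norm_eq_abs] at h
  calc 1 - √(12 * (ε / |t|) + 7 * (ε / |t|) ^ 2)
      = (|t| - √(6 * ε * (2 * |t| + ε) + ε ^ 2)) / |t| := by
        have hrad : 12 * (ε / |t|) + 7 * (ε / |t|) ^ 2
            = (6 * ε * (2 * |t| + ε) + ε ^ 2) / |t| ^ 2 := by
          field_simp
          ring
        rw [hrad, Real.sqrt_div' _ (sq_nonneg _), Real.sqrt_sq ht.le, sub_div, div_self ht.ne']
    _ ≤ infDist (t • e) (Set.range f) / |t| := by gcongr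

lemma surjective_of_isAsymptote [CompleteSpace E] (hf : IsNearisometryOn f Set.univ ε)
    (hf0 : f 0 = 0) {T : E →ₗᵢ[ℝ] F} (hT : IsAsymptote f T) (htau : tauSet (Set.range f) < 1) :
    Function.Surjective T := by
  by_contra hsurj
  obtain ⟨e, he, horth⟩ := exists_norm_eq_one_inner_eq_zero_of_not_surjective hsurj
  refine htau.not_ge ?_
  rw [← (hf.tendsto_infDist_smul_div_abs hf0 hT he horth).liminf_eq]
  exact liminf_infDist_le_tauSet (Set.mem_range.2 ⟨0, hf0⟩) he

lemma inner_asymptote_sub_le (hf : IsNearisometryOn f Set.univ ε) (hf0 : f 0 = 0)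
    {T : E →ₗᵢ[ℝ] F} (hT : IsAsymptote f T) (x w : E) :
    inner ℝ (T x - f x) (T w) ≤ 2 * ε * ‖w‖ := by
  rcases eq_or_ne w 0 with rfl | hw
  · simp only [map_zero, inner_zero_right, norm_zero, mul_zero, le_refl]
  have hTw : T w ≠ 0 := (map_ne_zero_iff T T.injective).2 hw
  have hlim_f := tendsto_norm_sub_smul_sub_norm_smul hTw tendsto_id (hT w) (f x)
  have hlim_T := tendsto_norm_sub_smul_sub_norm_smul hTw tendsto_id
    (tendsto_const_nhds (x := T w)) (T x)
  have hlim : -inner ℝ (f x) (T w) / ‖T w‖ ≤ -inner ℝ (T x) (T w) / ‖T w‖ + 2 * ε := by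
    refine le_of_tendsto_of_tendsto hlim_f (hlim_T.add_const (2 * ε)) ?_
    filter_upwards [eventually_gt_atTop 0] with t ht
    simp only [id_eq, smul_rescale ht.ne', ← map_smul, ← map_sub, T.norm_map]
    linarith [hf.norm_map_sub_le (Set.mem_univ x) (Set.mem_univ (t • w)),
      hf.norm_le trivial hf0 (Set.mem_univ (t • w))]
  rw [T.norm_map, ← sub_le_iff_le_add', ← sub_div, div_le_iff₀ (norm_pos_iff.2 hw)] at hlim
  rw [inner_sub_left]
  linarith

end InnerProductSpace

end IsNearisometryOn

/-- Theorem 5.3: if `E` is a Banach space, `F` a Hilbert space, and `f : E → F` an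
`ε`-nearisometry with `f 0 = 0` and `τ(f(E)) < 1`, then there is a surjective linear
isometry `T : E → F` with `|T x - f x| ≤ 2ε` for all `x`. -/
theorem hyersUlam_of_tau_lt_one {E F : Type*}
    [NormedAddCommGroup E] [NormedSpace ℝ E] [CompleteSpace E]
    [NormedAddCommGroup F] [InnerProductSpace ℝ F] [CompleteSpace F]
    (f : E → F) (ε : ℝ) (hε : 0 ≤ ε)
    (hf : IsNearisometryOn f Set.univ ε) (hf0 : f 0 = 0)
    (htau : tauSet (Set.range f) < 1) :
    ∃ T : E →ₗᵢ[ℝ] F, Function.Surjective T ∧ ∀ x : E, ‖T x - f x‖ ≤ 2 * ε := by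
  obtain ⟨T, hT⟩ := hf.exists_isAsymptote hf0
  have hsurj : Function.Surjective T := hf.surjective_of_isAsymptote hf0 hT htau
  refine ⟨T, hsurj, fun x => ?_⟩
  obtain ⟨w, hw⟩ := hsurj (T x - f x)
  have hsq : ‖T x - f x‖ * ‖T x - f x‖ ≤ 2 * ε * ‖T x - f x‖ :=
    calc ‖T x - f x‖ * ‖T x - f x‖ = inner ℝ (T x - f x) (T w) := by
          rw [hw, real_inner_self_eq_norm_mul_norm]
      _ ≤ 2 * ε * ‖w‖ := hf.inner_asymptote_sub_le hf0 hT x w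
      _ = 2 * ε * ‖T x - f x‖ := by rw [← hw, T.norm_map]
  rcases (norm_nonneg (T x - f x)).eq_or_lt with hzero | hpos
  · rw [← hzero]
    positivity
  · exact le_of_mul_le_mul_right hsq hpos
end

section
/- Let E and F be real Banach spaces, let A ⊆ E, and let f : A → F be an ε-nearisometry for some ε ≥ 0 such that the sets E \ A and F \ f(A) are bounded. Then there is a surjective isometry T : E → F with |T x − f x| ≤ 2ε for all x ∈ A; moreover, for each x₀ ∈ A one can choose such a T with T x₀ = f x₀. -/
open Filter Metric Bornology

/-! Redefine `f` on the bounded set `E \ A` so that it has an inverse up to bounded error. The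
defect `f ((a + b) / 2) - (f a + f b) / 2` then has size `O(log |a - b|)`, by a quantitative
version of Väisälä's reflection proof of the Mazur–Ulam theorem, so `2⁻ⁿ f (2ⁿ x)` converges to a
linear isometry `T` of `E` onto `F`.

For the sharp constant normalize `x₀ = 0` and `f x₀ = 0`, and put `y = T x` and `u = f x - y`.
For `z` near `u` on the line `u + ℝ y`, compare the distances of `f x` and of `f 0` to
`f (-c T⁻¹ z)` as `c → ∞`. If the norm of `F` has a derivative at `z` along `y`, this yields
`‖z‖ ≤ 2ε + o(1)` as `z → u`. By Lebesgue's theorem, the norm restricted to the line is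
differentiable at a dense set of points, hence `‖u‖ ≤ 2ε`.
-/

open scoped Topology

section CoarseAdjoint

variable {X Y Z : Type*} [PseudoMetricSpace X] [PseudoMetricSpace Y] [PseudoMetricSpace Z]

/-- `f : X → Y` and `g : Y → X` are coarsely adjoint with constant `K` if moving a point across
`dist` by means of them changes the distance by at most `K`. This single inequality says that `f`
and `g` are near-isometries and inverse to each other up to a bounded error, and it composes with
merely additive constants. For `K = 0` in metric spaces, `f` is an isometric bijection with
inverse `g`. -/
def IsCoarseAdjoint (f : X → Y) (g : Y → X) (K : ℝ) : Prop :=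
  ∀ x y, |dist (f x) y - dist x (g y)| ≤ K

namespace IsCoarseAdjoint

variable {f : X → Y} {g : Y → X} {K : ℝ}

theorem symm (h : IsCoarseAdjoint f g K) : IsCoarseAdjoint g f K := fun y x ↦ by
  rw [abs_sub_comm, dist_comm y, dist_comm (g y)]
  exact h x y

theorem of_isometryEquiv (e : X ≃ᵢ Y) : IsCoarseAdjoint e e.symm 0 := fun x y ↦ by
  rw [← e.dist_eq x, e.apply_symm_apply, sub_self, abs_zero]

theorem comp {f' : Y → Z} {g' : Z → Y} {L : ℝ} (h' : IsCoarseAdjoint f' g' L)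
    (h : IsCoarseAdjoint f g K) : IsCoarseAdjoint (f' ∘ f) (g ∘ g') (L + K) := fun x z ↦
  (abs_sub_le _ (dist (f x) (g' z)) _).trans (add_le_add (h' (f x) z) (h x (g' z)))

theorem dist_left_le (h : IsCoarseAdjoint f g K) (x : X) (y : Y) :
    dist (f x) y ≤ dist x (g y) + K := by
  linarith [(abs_le.1 (h x y)).2]

theorem dist_right_le (h : IsCoarseAdjoint f g K) (x : X) (y : Y) :
    dist x (g y) ≤ dist (f x) y + K := by
  linarith [(abs_le.1 (h x y)).1]

theorem dist_apply_apply_self_le (h : IsCoarseAdjoint f g K) (x : X) : dist x (g (f x)) ≤ K := by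
  simpa using h.dist_right_le x (f x)

theorem dist_map_map_le (h : IsCoarseAdjoint f g K) (x y : X) :
    dist (f x) (f y) ≤ dist x y + 2 * K := by
  linarith [h.dist_left_le x (f y), dist_triangle x y (g (f y)), h.dist_apply_apply_self_le y]

end IsCoarseAdjoint

end CoarseAdjoint

theorem exists_eqOn_id_dist_le_of_isBounded_compl {X : Type*} [PseudoMetricSpace X] {s : Set X}
    (hs : IsBounded sᶜ) (hne : s.Nonempty) :
    ∃ (π : X → X) (R : ℝ), (∀ x, π x ∈ s) ∧ Set.EqOn π id s ∧ ∀ x, dist (π x) x ≤ R := by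
  classical
  obtain ⟨x₀, hx₀⟩ := hne
  obtain ⟨R, hR⟩ := hs.subset_closedBall x₀
  refine ⟨s.piecewise id fun _ ↦ x₀, max R 0, fun x ↦ ?_, s.piecewise_eqOn _ _, fun x ↦ ?_⟩ <;>
    by_cases hx : x ∈ s
  · simp [hx]
  · simpa [hx] using hx₀
  · simp [hx]
  · simpa [hx, dist_comm] using Or.inl (hR hx)

theorem IsNearisometryOn.exists_isCoarseAdjoint {E F : Type*} [NormedAddCommGroup E]
    [NormedAddCommGroup F] {A : Set E} {f : E → F} {ε : ℝ} (hf : IsNearisometryOn f A ε)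
    (hA : IsBounded Aᶜ) (hfA : IsBounded (f '' A)ᶜ) (hne : A.Nonempty) :
    ∃ (f' : E → F) (g : F → E) (K : ℝ), Set.EqOn f' f A ∧ IsCoarseAdjoint f' g K := by
  obtain ⟨π, R, hπA, hπ, hR⟩ := exists_eqOn_id_dist_le_of_isBounded_compl hA hne
  obtain ⟨σ, S, hσA, -, hS⟩ := exists_eqOn_id_dist_le_of_isBounded_compl hfA (hne.image f)
  choose g hgA hg using hσA
  refine ⟨f ∘ π, g, S + (ε + R), fun x hx ↦ congrArg f (hπ hx), fun x y ↦ ?_⟩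
  have hy : |dist (f (π x)) y - dist (f (π x)) (f (g y))| ≤ S := by
    rw [hg, dist_comm _ y, dist_comm _ (σ y)]
    exact (abs_dist_sub_le _ _ _).trans ((dist_comm _ _).trans_le (hS y))
  have hmap : |dist (f (π x)) (f (g y)) - dist (π x) (g y)| ≤ ε := by
    simpa only [dist_eq_norm] using hf _ (hπA x) _ (hgA y)
  have hx : |dist (π x) (g y) - dist x (g y)| ≤ R := (abs_dist_sub_le _ _ _).trans (hR x)
  exact (abs_sub_le _ _ _).trans (add_le_add hy ((abs_sub_le _ _ _).trans (add_le_add hmap hx)))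

namespace IsCoarseAdjoint

section LeftInverse

variable {X Y : Type*} [MetricSpace X] [PseudoMetricSpace Y] {f : X → Y} {g : Y → X}

theorem leftInverse (h : IsCoarseAdjoint f g 0) : Function.LeftInverse g f := fun x ↦
  (dist_le_zero.1 (h.dist_apply_apply_self_le x)).symm

theorem isometry (h : IsCoarseAdjoint f g 0) : Isometry f :=
  Isometry.of_dist_eq fun x y ↦ by
    simpa only [h.leftInverse y, abs_nonpos_iff, sub_eq_zero] using h x (f y)

end LeftInverse

/-- The isometric bijection given by an exactly adjoint pair. -/
def toIsometryEquiv {X Y : Type*} [MetricSpace X] [MetricSpace Y] {f : X → Y} {g : Y → X}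
    (h : IsCoarseAdjoint f g 0) : X ≃ᵢ Y :=
  IsometryEquiv.mk' f g h.symm.leftInverse h.isometry

section Midpoint

open AffineIsometryEquiv

variable {V W P Q : Type*} [SeminormedAddCommGroup V] [NormedSpace ℝ V] [PseudoMetricSpace P]
  [NormedAddTorsor V P] [SeminormedAddCommGroup W] [NormedSpace ℝ W] [PseudoMetricSpace Q]
  [NormedAddTorsor W Q] {f : P → Q} {g : Q → P} {K : ℝ}

theorem dist_map_midpoint_le_half_add (h : IsCoarseAdjoint f g K) (a b : P) :
    dist (f (midpoint ℝ a b)) (midpoint ℝ (f a) (f b)) ≤ dist a b / 2 + 2 * K := by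
  set z := midpoint ℝ a b
  have hmid : dist (f z) (midpoint ℝ (f a) (f b)) ≤ (dist (f z) (f a) + dist (f z) (f b)) / 2 := by
    simpa using dist_midpoint_midpoint_le' (𝕜 := ℝ) (f z) (f z) (f a) (f b)
  have hza : dist z a = dist a b / 2 := by
    rw [dist_midpoint_left (𝕜 := ℝ), Real.norm_two, inv_mul_eq_div]
  have hzb : dist z b = dist a b / 2 := by
    rw [dist_midpoint_right (𝕜 := ℝ), Real.norm_two, inv_mul_eq_div]
  linarith [h.dist_map_map_le z a, h.dist_map_map_le z b]

-- `φ` is the commutator-like map of Väisälä's proof of the Mazur–Ulam theorem: it almost fixes `a`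
-- and `b`, and it doubles the midpoint defect of `f`.
theorem exists_two_mul_dist_map_midpoint_le (h : IsCoarseAdjoint f g K) (a b : P) :
    ∃ φ ψ : P → P, IsCoarseAdjoint φ ψ (2 * K) ∧
      2 * dist (f (midpoint ℝ a b)) (midpoint ℝ (f a) (f b)) ≤
        dist (φ (midpoint ℝ a b)) (midpoint ℝ (φ a) (φ b)) + 2 * K := by
  set z := midpoint ℝ a b
  set w := midpoint ℝ (f a) (f b) with hw
  let R := pointReflection ℝ z
  let S := pointReflection ℝ w
  let φ : P → P := R ∘ g ∘ S ∘ f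
  have hφ : IsCoarseAdjoint φ ((g ∘ S.symm ∘ f) ∘ R.symm) (2 * K) := by
    have hconst : 2 * K = 0 + (K + (0 + K)) := by ring
    rw [hconst]
    exact (of_isometryEquiv R.toIsometryEquiv).comp
      (h.symm.comp ((of_isometryEquiv S.toIsometryEquiv).comp h))
  have hφa : dist (φ a) a ≤ K := by
    have : φ a = R (g (f b)) := by simp [φ, S, hw]
    rw [this, ← pointReflection_midpoint_right a b, R.dist_map, dist_comm]
    exact h.dist_apply_apply_self_le b
  have hφb : dist (φ b) b ≤ K := by
    have : φ b = R (g (f a)) := by simp [φ, S, hw]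
    rw [this, ← pointReflection_midpoint_left a b, R.dist_map, dist_comm]
    exact h.dist_apply_apply_self_le a
  have hmid : dist (midpoint ℝ (φ a) (φ b)) z ≤ (dist (φ a) a + dist (φ b) b) / 2 := by
    simpa using dist_midpoint_midpoint_le' (𝕜 := ℝ) (φ a) (φ b) a b
  refine ⟨φ, _, hφ, ?_⟩
  calc 2 * dist (f z) w = dist (f z) (S (f z)) := by
        rw [dist_comm _ (S _), dist_pointReflection_self_real, dist_comm]
    _ ≤ dist z (g (S (f z))) + K := h.dist_left_le _ _
    _ = dist (φ z) z + K := by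
        rw [← R.dist_map, pointReflection_self, dist_comm]; rfl
    _ ≤ dist (φ z) (midpoint ℝ (φ a) (φ b)) + 2 * K := by
        linarith [dist_triangle (φ z) (midpoint ℝ (φ a) (φ b)) z]

theorem dist_self_map_midpoint_le (a b : P) (k : ℕ) :
    ∀ {f g : P → P} {K : ℝ}, IsCoarseAdjoint f g K →
      dist (f (midpoint ℝ a b)) (midpoint ℝ (f a) (f b)) ≤
        dist a b / 2 ^ (k + 1) + (k + 2) * K := by
  induction k with
  | zero => intro f g K h; simpa using h.dist_map_midpoint_le_half_add a b
  | succ k ih =>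
    intro f g K h
    obtain ⟨φ, ψ, hφ, hle⟩ := h.exists_two_mul_dist_map_midpoint_le a b
    have hhalf : dist a b / 2 ^ (k + 1) = 2 * (dist a b / 2 ^ (k + 1 + 1)) := by ring
    push_cast
    linarith [ih hφ]

theorem dist_map_midpoint_le (h : IsCoarseAdjoint f g K) (a b : P) (k : ℕ) :
    dist (f (midpoint ℝ a b)) (midpoint ℝ (f a) (f b)) ≤
      dist a b / 2 ^ (k + 2) + (k + 3) * K := by
  obtain ⟨φ, ψ, hφ, hle⟩ := h.exists_two_mul_dist_map_midpoint_le a b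
  have hhalf : dist a b / 2 ^ (k + 1) = 2 * (dist a b / 2 ^ (k + 2)) := by ring
  linarith [dist_self_map_midpoint_le a b k hφ]

end Midpoint

end IsCoarseAdjoint

/-- `T` is the pointwise limit along `l` of the rescalings `x ↦ (c i)⁻¹ • f (c i • x)` of `f`; with
`c` tending to infinity, this is the map that `f` becomes when seen from infinitely far away. -/
def HasScalingLimit {ι E F : Type*} [AddCommGroup E] [Module ℝ E] [AddCommGroup F] [Module ℝ F]
    [TopologicalSpace F] (l : Filter ι) (c : ι → ℝ) (f T : E → F) : Prop :=
  ∀ x, Tendsto (fun i ↦ (c i)⁻¹ • f (c i • x)) l (𝓝 (T x))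

section ScalingLimit

variable {ι E F : Type*} [NormedAddCommGroup E] [NormedSpace ℝ E] [NormedAddCommGroup F]
  [NormedSpace ℝ F] {l : Filter ι} {c : ι → ℝ} {f T : E → F} {g S : F → E} {K : ℝ}

theorem HasScalingLimit.map_zero [l.NeBot] (hT : HasScalingLimit l c f T)
    (hc : Tendsto c l atTop) : T 0 = 0 := by
  refine tendsto_nhds_unique (hT 0) ?_
  simpa [Pi.inv_apply] using hc.inv_tendsto_atTop.smul_const (f 0)

namespace IsCoarseAdjoint

theorem rescale (h : IsCoarseAdjoint f g K) {r : ℝ} (hr : 0 < r) :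
    IsCoarseAdjoint (fun x ↦ r⁻¹ • f (r • x)) (fun y ↦ r⁻¹ • g (r • y)) (r⁻¹ * K) := fun x y ↦ by
  have hleft : dist (r⁻¹ • f (r • x)) y = r⁻¹ * dist (f (r • x)) (r • y) := by
    nth_rw 1 [← inv_smul_smul₀ hr.ne' y]
    rw [dist_smul₀, Real.norm_of_nonneg (inv_nonneg.2 hr.le)]
  have hright : dist x (r⁻¹ • g (r • y)) = r⁻¹ * dist (r • x) (g (r • y)) := by
    nth_rw 1 [← inv_smul_smul₀ hr.ne' x]
    rw [dist_smul₀, Real.norm_of_nonneg (inv_nonneg.2 hr.le)]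
  rw [hleft, hright, ← mul_sub, abs_mul, abs_of_pos (inv_pos.2 hr)]
  gcongr
  exact h _ _

theorem scalingLimit [l.NeBot] (h : IsCoarseAdjoint f g K) (hc : Tendsto c l atTop)
    (hT : HasScalingLimit l c f T) (hS : HasScalingLimit l c g S) : IsCoarseAdjoint T S 0 := by
  intro x y
  have hbound : Tendsto (fun i ↦ (c i)⁻¹ * K) l (𝓝 0) := by
    simpa using hc.inv_tendsto_atTop.mul_const K
  refine le_of_tendsto_of_tendsto
    (((hT x).dist tendsto_const_nhds).sub (tendsto_const_nhds.dist (hS y))).abs hbound ?_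
  filter_upwards [hc.eventually_gt_atTop 0] with i hi
  exact h.rescale hi x y

theorem norm_map_two_smul_sub_le (h : IsCoarseAdjoint f g K) (y : E) (k : ℕ) :
    ‖f ((2 : ℝ) • y) - (2 : ℝ) • f y‖ ≤ ‖y‖ / 2 ^ k + 2 * (k + 3) * K + ‖f 0‖ := by
  have hmid := h.dist_map_midpoint_le 0 ((2 : ℝ) • y) k
  have hy : midpoint ℝ 0 ((2 : ℝ) • y) = y := by
    rw [midpoint_eq_smul_add, zero_add, invOf_eq_inv, inv_smul_smul₀ two_ne_zero]
  have hdist : dist 0 ((2 : ℝ) • y) / 2 ^ (k + 2) = ‖y‖ / 2 ^ k / 2 := by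
    rw [dist_zero_left, norm_smul, Real.norm_two]
    ring
  have hdecomp : f ((2 : ℝ) • y) - (2 : ℝ) • f y =
      (2 : ℝ) • (midpoint ℝ (f 0) (f ((2 : ℝ) • y)) - f y) - f 0 := by
    rw [midpoint_eq_smul_add, invOf_eq_inv]
    module
  rw [hy, hdist, dist_comm, dist_eq_norm] at hmid
  calc ‖f ((2 : ℝ) • y) - (2 : ℝ) • f y‖
      ≤ 2 * ‖midpoint ℝ (f 0) (f ((2 : ℝ) • y)) - f y‖ + ‖f 0‖ := by
        rw [hdecomp, ← Real.norm_two, ← norm_smul, Real.norm_two]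
        exact norm_sub_le _ _
    _ ≤ ‖y‖ / 2 ^ k + 2 * (k + 3) * K + ‖f 0‖ := by linarith

theorem exists_hasScalingLimit [CompleteSpace F] (h : IsCoarseAdjoint f g K) :
    ∃ T, HasScalingLimit atTop (fun n : ℕ ↦ (2 : ℝ) ^ n) f T := by
  suffices ∀ x, ∃ y, Tendsto (fun n : ℕ ↦ ((2 : ℝ) ^ n)⁻¹ • f ((2 : ℝ) ^ n • x)) atTop (𝓝 y) from
    Classical.skolem.1 this
  intro x
  let b (n : ℕ) : ℝ := ((2 : ℝ) ^ (n + 1))⁻¹ * (‖x‖ + 2 * (n + 3) * K + ‖f 0‖)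
  have hb : Summable b := by
    have hgeom : Summable fun n : ℕ ↦ (1 / 2 : ℝ) ^ n := summable_geometric_two
    have hlin : Summable fun n : ℕ ↦ (n : ℝ) * (1 / 2 : ℝ) ^ n := by
      simpa using summable_pow_mul_geometric_of_norm_lt_one 1 (r := (1 / 2 : ℝ)) (by norm_num)
    refine ((hgeom.mul_left ((‖x‖ + 6 * K + ‖f 0‖) / 2)).add (hlin.mul_left K)).congr fun n ↦ ?_
    simp only [b, one_div, inv_pow]
    ring
  refine cauchySeq_tendsto_of_complete (cauchySeq_of_dist_le_of_summable b (fun n ↦ ?_) hb)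
  have hdiff : ((2 : ℝ) ^ (n + 1))⁻¹ • f ((2 : ℝ) ^ (n + 1) • x) -
      ((2 : ℝ) ^ n)⁻¹ • f ((2 : ℝ) ^ n • x) =
      ((2 : ℝ) ^ (n + 1))⁻¹ • (f ((2 : ℝ) • (2 : ℝ) ^ n • x) - (2 : ℝ) • f ((2 : ℝ) ^ n • x)) := by
    rw [smul_sub, smul_smul 2, smul_smul _ 2, ← pow_succ', pow_succ' _ n, mul_inv_rev,
      inv_mul_cancel_right₀ two_ne_zero]
  have hnorm : ‖(2 : ℝ) ^ n • x‖ / 2 ^ n = ‖x‖ := by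
    rw [norm_smul, norm_pow, Real.norm_two, mul_div_cancel_left₀ _ (by positivity)]
  rw [dist_comm, dist_eq_norm, hdiff, norm_smul, Real.norm_of_nonneg (by positivity)]
  refine mul_le_mul_of_nonneg_left ?_ (by positivity)
  simpa only [hnorm] using h.norm_map_two_smul_sub_le ((2 : ℝ) ^ n • x) n

theorem exists_linearIsometryEquiv [CompleteSpace E] [CompleteSpace F]
    (h : IsCoarseAdjoint f g K) :
    ∃ T : E ≃ₗᵢ[ℝ] F, HasScalingLimit atTop (fun n : ℕ ↦ (2 : ℝ) ^ n) f T := by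
  obtain ⟨T, hT⟩ := h.exists_hasScalingLimit
  obtain ⟨S, hS⟩ := h.symm.exists_hasScalingLimit
  have hc : Tendsto (fun n : ℕ ↦ (2 : ℝ) ^ n) atTop atTop :=
    tendsto_pow_atTop_atTop_of_one_lt one_lt_two
  exact ⟨(h.scalingLimit hc hT hS).toIsometryEquiv.toRealLinearIsometryEquivOfMapZero
    (hT.map_zero hc), hT⟩

end IsCoarseAdjoint

end ScalingLimit

section NormLineDeriv

variable {ι E : Type*} [SeminormedAddCommGroup E] [NormedSpace ℝ E] {l : Filter ι} {c : ι → ℝ}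
  {d : ℝ} {y z : E}

theorem tendsto_norm_smul_add_sub_norm_smul (hd : HasLineDerivAt ℝ norm d z y)
    (hc : Tendsto c l atTop) :
    Tendsto (fun i ↦ ‖c i • z + y‖ - ‖c i • z‖) l (𝓝 d) := by
  refine (hd.tendsto_slope_zero_right.comp (tendsto_inv_atTop_nhdsGT_zero.comp hc)).congr' ?_
  filter_upwards [hc.eventually_gt_atTop 0] with i hi
  have hsmul : c i • z + y = c i • (z + (c i)⁻¹ • y) := by
    rw [smul_add, smul_inv_smul₀ hi.ne']
  simp only [Function.comp_apply, inv_inv, smul_eq_mul]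
  rw [hsmul, norm_smul, norm_smul, Real.norm_of_nonneg hi.le, mul_sub]

-- Slopes of the convex function `t ↦ ‖x + t • y‖` on `[-s, 0]` and `[0, r⁻¹]`.
theorem norm_sub_norm_sub_smul_le {r s : ℝ} (hr : 0 ≤ r) (hs : 0 ≤ s) (x y : E) :
    ‖x‖ - ‖x - s • y‖ ≤ s * (‖r • x + y‖ - ‖r • x‖) := by
  have hcomb : (1 + s * r) • x = (x - s • y) + s • (r • x + y) := by module
  have hnorm : (1 + s * r) * ‖x‖ ≤ ‖x - s • y‖ + s * ‖r • x + y‖ := by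
    rw [← Real.norm_of_nonneg (by positivity : 0 ≤ 1 + s * r), ← norm_smul, hcomb,
      ← Real.norm_of_nonneg hs, ← norm_smul, Real.norm_of_nonneg hs]
    exact norm_add_le _ _
  rw [norm_smul, Real.norm_of_nonneg hr]
  linarith

theorem le_of_hasLineDerivAt_norm [l.NeBot] (hd : HasLineDerivAt ℝ norm d z y)
    (hc : Tendsto c l atTop) {u : ι → E} (hu : Tendsto u l (𝓝 z)) {b : ι → ℝ} {β : ℝ}
    (hb : Tendsto b l (𝓝 β)) (hle : ∀ᶠ i in l, ‖c i • u i + y‖ - ‖c i • u i‖ ≤ b i) : d ≤ β := by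
  have hslope (s : ℝ) (hs : 0 ≤ s) : ‖z‖ - ‖z - s • y‖ ≤ s * β := by
    refine le_of_tendsto_of_tendsto (hu.norm.sub (hu.sub_const _).norm) (hb.const_mul s) ?_
    filter_upwards [hle, hc.eventually_ge_atTop 0] with i hi hci
    exact (norm_sub_norm_sub_smul_le hci hs (u i) y).trans (by gcongr)
  refine le_of_tendsto hd.tendsto_slope_zero_left ?_
  filter_upwards [self_mem_nhdsWithin] with t (ht : t < 0)
  have hneg := hslope (-t) (by linarith)
  rw [neg_smul, sub_neg_eq_add] at hneg
  rw [smul_eq_mul, inv_mul_eq_div, div_le_iff_of_neg ht]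
  linarith

theorem hasLineDerivAt_norm_self_add (hd : HasLineDerivAt ℝ norm d z y) :
    HasLineDerivAt ℝ norm (‖z‖ + d) z (z + y) := by
  have hadd : HasDerivAt (fun s : ℝ ↦ 1 + s) 1 0 := (hasDerivAt_id 0).const_add 1
  have hquot : HasDerivAt (fun s : ℝ ↦ s / (1 + s)) 1 0 := by
    simpa using (hasDerivAt_id' (0 : ℝ)).fun_div hadd (by norm_num)
  have hcomp : HasDerivAt (fun s : ℝ ↦ ‖z + (s / (1 + s)) • y‖) d 0 :=
    (HasDerivAt.comp_of_eq (h₂ := fun t ↦ ‖z + t • y‖) 0 hd hquot (zero_div _).symm).congr_deriv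
      (mul_one d)
  have hprod : HasDerivAt (fun s : ℝ ↦ (1 + s) * ‖z + (s / (1 + s)) • y‖) (‖z‖ + d) 0 := by
    simpa using hadd.fun_mul hcomp
  refine hprod.congr_of_eventuallyEq ?_
  filter_upwards [eventually_gt_nhds (show (-1 : ℝ) < 0 by norm_num)] with s hs
  have hpos : 0 < 1 + s := by linarith
  have hsmul : z + s • (z + y) = (1 + s) • (z + (s / (1 + s)) • y) := by
    rw [smul_add (1 + s), smul_smul, mul_div_cancel₀ _ hpos.ne']
    module
  rw [hsmul, norm_smul, Real.norm_of_nonneg hpos.le]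

theorem dense_lineDifferentiableAt_of_lipschitzWith {C : NNReal} {φ : E → ℝ}
    (hφ : LipschitzWith C φ) (x y : E) :
    Dense {t : ℝ | LineDifferentiableAt ℝ φ (x + t • y) y} := by
  have hline : LipschitzWith (C * ‖y‖₊) fun t : ℝ ↦ φ (x + t • y) :=
    hφ.comp <| LipschitzWith.of_dist_le_mul fun s t ↦ by
      rw [dist_add_left, dist_eq_norm, ← sub_smul, norm_smul, mul_comm, dist_eq_norm, coe_nnnorm]
  refine (MeasureTheory.Measure.dense_of_ae hline.ae_differentiableAt_real).mono fun t ht ↦ ?_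
  have hshift : DifferentiableAt ℝ (fun s : ℝ ↦ φ (x + (t + s) • y)) 0 :=
    DifferentiableAt.comp (g := fun s : ℝ ↦ φ (x + s • y)) 0 (by simpa using ht) (by fun_prop)
  simpa [LineDifferentiableAt, add_smul, add_assoc] using hshift

end NormLineDeriv

section Nearisometry

variable {ι E F : Type*} [NormedAddCommGroup E] [NormedSpace ℝ E] [NormedAddCommGroup F]
  [NormedSpace ℝ F] {l : Filter ι} {c : ι → ℝ} {A : Set E} {f : E → F} {x₀ x : E} {ε : ℝ}

theorem eventually_add_smul_mem (hA : IsBounded Aᶜ) (hx₀ : x₀ ∈ A) (hc : Tendsto c l atTop)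
    (v : E) : ∀ᶠ i in l, x₀ + c i • v ∈ A := by
  rcases eq_or_ne v 0 with rfl | hv
  · simp [hx₀]
  have hnorm : Tendsto (fun i ↦ ‖c i • v‖) l atTop := by
    simpa only [norm_smul, Function.comp_apply] using
      (tendsto_norm_atTop_atTop.comp hc).atTop_mul_const (norm_pos_iff.2 hv)
  exact (tendsto_const_add_cobounded x₀).comp (tendsto_norm_atTop_iff_cobounded.1 hnorm)
    (isBounded_compl_iff.1 hA)

namespace IsNearisometryOn

-- Compare `f x` and `f x₀` with `f p` for `p = x₀ - c i • T⁻¹ z`. From such a far away point only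
-- the derivative of the norm in the direction of `z` is visible.
theorem norm_le_of_hasLineDerivAt [l.NeBot] (hf : IsNearisometryOn f A ε) (hA : IsBounded Aᶜ)
    (hx₀ : x₀ ∈ A) (hx : x ∈ A) (hc : Tendsto c l atTop) {T : E ≃ₗᵢ[ℝ] F}
    (hT : HasScalingLimit l c (fun v ↦ f (x₀ + v) - f x₀) T) {z : F} {a d : ℝ}
    (hz : f x - f x₀ = z + a • T (x - x₀)) (hd : HasLineDerivAt ℝ norm d z (T (x - x₀))) :
    ‖z‖ ≤ (1 - a) * d + 2 * ε := by
  let p (i : ι) : E := x₀ + c i • -T.symm z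
  let u (i : ι) : F := -((c i)⁻¹ • (f (p i) - f x₀))
  have hu : Tendsto u l (𝓝 z) := by
    simpa only [map_neg, T.apply_symm_apply, neg_neg] using (hT (-T.symm z)).neg
  have hb := (tendsto_norm_smul_add_sub_norm_smul hd hc).add_const (2 * ε)
  suffices ‖z‖ + a * d ≤ d + 2 * ε by linarith
  refine le_of_hasLineDerivAt_norm (hasLineDerivAt_norm_self_add (hd.smul a)) hc hu hb ?_
  filter_upwards [eventually_add_smul_mem hA hx₀ hc (-T.symm z), hc.eventually_gt_atTop 0]
    with i hp hi
  have hfx₀ : c i • u i = f x₀ - f (p i) := by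
    rw [smul_neg, smul_inv_smul₀ hi.ne', neg_sub]
  have hfx : c i • u i + (z + a • T (x - x₀)) = f x - f (p i) := by
    rw [hfx₀, ← hz]
    abel
  have hx₀p : ‖x₀ - p i‖ = ‖c i • z‖ := by
    rw [← T.norm_map]
    simp [p]
  have hxp : ‖x - p i‖ = ‖c i • z + T (x - x₀)‖ := by
    rw [← T.norm_map]
    congr 1
    simp only [p, map_sub, map_add, map_smul, map_neg, T.apply_symm_apply]
    module
  rw [hfx, hfx₀, ← hx₀p, ← hxp]
  linarith [(abs_le.1 (hf x hx (p i) hp)).2, (abs_le.1 (hf x₀ hx₀ (p i) hp)).1]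

theorem norm_sub_sub_le [l.NeBot] (hf : IsNearisometryOn f A ε) (hA : IsBounded Aᶜ)
    (hx₀ : x₀ ∈ A) (hx : x ∈ A) (hc : Tendsto c l atTop) {T : E ≃ₗᵢ[ℝ] F}
    (hT : HasScalingLimit l c (fun v ↦ f (x₀ + v) - f x₀) T) :
    ‖f x - f x₀ - T (x - x₀)‖ ≤ 2 * ε := by
  set y := T (x - x₀)
  set u := f x - f x₀ - y with hu
  have hclosed : IsClosed {t : ℝ | ‖u + t • y‖ ≤ ‖t‖ * ‖y‖ + 2 * ε} :=
    isClosed_le (by fun_prop) (by fun_prop)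
  have hsub : {t : ℝ | LineDifferentiableAt ℝ norm (u + t • y) y} ⊆
      {t : ℝ | ‖u + t • y‖ ≤ ‖t‖ * ‖y‖ + 2 * ε} := by
    intro t ht
    have hd := ht.hasLineDerivAt
    have hz : f x - f x₀ = (u + t • y) + (1 - t) • y := by
      rw [hu]
      module
    have hle := hf.norm_le_of_hasLineDerivAt hA hx₀ hx hc hT hz hd
    have hdy : ‖lineDeriv ℝ norm (u + t • y) y‖ ≤ ‖y‖ := by
      simpa using hd.le_of_lipschitz lipschitzWith_one_norm
    calc ‖u + t • y‖ ≤ t * lineDeriv ℝ norm (u + t • y) y + 2 * ε := by linarith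
      _ ≤ ‖t‖ * ‖y‖ + 2 * ε := by
        rw [add_le_add_iff_right]
        exact (Real.le_norm_self _).trans (norm_mul_le_of_le le_rfl hdy)
  have hdense := dense_lineDifferentiableAt_of_lipschitzWith lipschitzWith_one_norm u y
  simpa using hclosed.closure_subset_iff.2 hsub (hdense 0)

theorem exists_linearIsometryEquiv [CompleteSpace E] [CompleteSpace F]
    (hf : IsNearisometryOn f A ε) (hA : IsBounded Aᶜ) (hfA : IsBounded (f '' A)ᶜ)
    (hx₀ : x₀ ∈ A) :
    ∃ T : E ≃ₗᵢ[ℝ] F, ∀ x ∈ A, ‖f x - f x₀ - T (x - x₀)‖ ≤ 2 * ε := by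
  obtain ⟨f', g, K, hf', hadj⟩ := hf.exists_isCoarseAdjoint hA hfA ⟨x₀, hx₀⟩
  have hadj₀ := (IsCoarseAdjoint.of_isometryEquiv (IsometryEquiv.subRight (f' x₀))).comp
    (hadj.comp (IsCoarseAdjoint.of_isometryEquiv (IsometryEquiv.addLeft x₀)))
  obtain ⟨T, hT⟩ := hadj₀.exists_linearIsometryEquiv
  have hnear : IsNearisometryOn f' A ε := fun x hx y hy ↦ by
    rw [hf' hx, hf' hy]
    exact hf x hx y hy
  refine ⟨T, fun x hx ↦ ?_⟩
  rw [← hf' hx, ← hf' hx₀]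
  exact hnear.norm_sub_sub_le hA hx₀ hx (tendsto_pow_atTop_atTop_of_one_lt one_lt_two) hT

end IsNearisometryOn

end Nearisometry

theorem subsingleton_of_isBounded_univ {E : Type*} [NormedAddCommGroup E] [NormedSpace ℝ E]
    (h : IsBounded (Set.univ : Set E)) : Subsingleton E := by
  by_contra hE
  rw [not_subsingleton_iff_nontrivial] at hE
  exact NormedSpace.unbounded_univ ℝ E h

/-- Theorem 6.1: if `E, F` are Banach spaces, `A ⊆ E`, and `f : A → F` is an
`ε`-nearisometry such that `E \ A` and `F \ f(A)` are bounded, then there is a surjective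
isometry `T : E → F` with `|T x - f x| ≤ 2ε` on `A`; moreover, for each `x₀ ∈ A` one can
choose `T` with `T x₀ = f x₀`. -/
theorem hyersUlam_local {E F : Type*}
    [NormedAddCommGroup E] [NormedSpace ℝ E] [CompleteSpace E]
    [NormedAddCommGroup F] [NormedSpace ℝ F] [CompleteSpace F]
    (A : Set E) (f : E → F) (ε : ℝ) (hε : 0 ≤ ε) (hf : IsNearisometryOn f A ε)
    (hEA : IsBounded (Set.univ \ A)) (hFfA : IsBounded (Set.univ \ (f '' A))) :
    (∃ T : E → F, Isometry T ∧ Function.Surjective T ∧ ∀ x ∈ A, ‖T x - f x‖ ≤ 2 * ε) ∧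
      ∀ x₀ ∈ A, ∃ T : E → F, Isometry T ∧ Function.Surjective T ∧
        (∀ x ∈ A, ‖T x - f x‖ ≤ 2 * ε) ∧ T x₀ = f x₀ := by
  rw [← Set.compl_eq_univ_sdiff] at hEA hFfA
  have hpointed : ∀ x₀ ∈ A, ∃ T : E → F, Isometry T ∧ Function.Surjective T ∧
      (∀ x ∈ A, ‖T x - f x‖ ≤ 2 * ε) ∧ T x₀ = f x₀ := by
    intro x₀ hx₀
    obtain ⟨U, hU⟩ := hf.exists_linearIsometryEquiv hEA hFfA hx₀
    let T : E ≃ᵢ F := ((IsometryEquiv.subRight x₀).trans U.toIsometryEquiv).trans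
      (IsometryEquiv.addRight (f x₀))
    have hT (x : E) : f x - T x = f x - f x₀ - U (x - x₀) := sub_add_eq_sub_sub_swap _ _ _
    refine ⟨T, T.isometry, T.surjective, fun x hx ↦ ?_, by simp [T]⟩
    rw [norm_sub_rev, hT]
    exact hU x hx
  refine ⟨?_, hpointed⟩
  rcases A.eq_empty_or_nonempty with rfl | ⟨x₀, hx₀⟩
  · have : Subsingleton E := subsingleton_of_isBounded_univ (by simpa using hEA)
    have : Subsingleton F := subsingleton_of_isBounded_univ (by simpa using hFfA)
    exact ⟨0, isometry_subsingleton, fun y ↦ ⟨0, Subsingleton.elim _ _⟩, by simp⟩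
  · obtain ⟨T, hT, hsurj, hle, -⟩ := hpointed x₀ hx₀
    exact ⟨T, hT, hsurj, hle⟩
end
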